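/- Let X ∈ ℝ^{m×n}, W ∈ ℝ^{m×r}, H ∈ ℝ^{r×n} be real matrices and λ a real scalar. Fix indices a ∈ {1,…,r}, b ∈ {1,…,n} and let E^{ab} ∈ ℝ^{r×n} be the matrix with entry 1 in position (a,b) and 0 elsewhere. Then the function t ↦ O(W, H + t·E^{ab}) is differentiable at t = 0 and its derivative there equals (−2·Wᵀ·X + 2·Wᵀ·W·H − 4λ·H·Xᵀ·X + 4λ²·H·Hᵀ·H)_{ab}; that is, the gradient of O with respect to H is −2WᵀX + 2WᵀWH − 4λHXᵀX + 4λ²HHᵀH. -/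

import Mathlib

open Matrix

/-- Squared Frobenius norm of a real matrix. -/
noncomputable def frobSq {m n : ℕ} (A : Matrix (Fin m) (Fin n) ℝ) : ℝ :=
  ∑ i, ∑ j, (A i j) ^ 2

/-- The DSP-NMF objective `O(W, H) = ‖X − W·H‖²_F + ‖Xᵀ·X − λ·Hᵀ·H‖²_F`. -/
noncomputable def dspObjective {m n r : ℕ} (X : Matrix (Fin m) (Fin n) ℝ) (lam : ℝ)
    (W : Matrix (Fin m) (Fin r) ℝ) (H : Matrix (Fin r) (Fin n) ℝ) : ℝ :=
  frobSq (X - W * H) + frobSq (Xᵀ * X - lam • (Hᵀ * H))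

/-- The derivative of the squared Frobenius norm along a differentiable matrix curve. -/
theorem hasDerivAt_frobSq {m n : ℕ} {A : ℝ → Matrix (Fin m) (Fin n) ℝ}
    {dA : Matrix (Fin m) (Fin n) ℝ} {t : ℝ}
    (hA : ∀ i j, HasDerivAt (fun s => A s i j) (dA i j) t) :
    HasDerivAt (fun s => frobSq (A s)) (2 * ((A t)ᵀ * dA).trace) t := by
  have h : HasDerivAt (fun s => ∑ i, ∑ j, (A s i j) ^ 2)
      (∑ i, ∑ j, 2 * A t i j * dA i j) t :=
    HasDerivAt.fun_sum fun i _ => HasDerivAt.fun_sum fun j _ => by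
      simpa using (hA i j).fun_pow 2
  refine h.congr_deriv ?_
  rw [Finset.sum_comm]
  simp [trace, mul_apply, Finset.mul_sum, mul_assoc]

/-- Entrywise product rule for matrix curves. -/
theorem hasDerivAt_matrix_mul_apply {l m n : ℕ}
    {A : ℝ → Matrix (Fin l) (Fin m) ℝ} {dA : Matrix (Fin l) (Fin m) ℝ}
    {B : ℝ → Matrix (Fin m) (Fin n) ℝ} {dB : Matrix (Fin m) (Fin n) ℝ} {t : ℝ}
    (hA : ∀ i j, HasDerivAt (fun s => A s i j) (dA i j) t)
    (hB : ∀ i j, HasDerivAt (fun s => B s i j) (dB i j) t) (i : Fin l) (j : Fin n) :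
    HasDerivAt (fun s => (A s * B s) i j) ((dA * B t + A t * dB) i j) t := by
  simp only [mul_apply, Matrix.add_apply, ← Finset.sum_add_distrib]
  exact HasDerivAt.fun_sum fun k _ => (hA i k).fun_mul (hB k j)

/-- Partial gradient of the DSP-NMF objective with respect to `H` (Appendix A):
`∂O/∂H = −2WᵀX + 2WᵀWH − 4λHXᵀX + 4λ²HHᵀH`, stated entrywise as a derivative
along the standard basis direction `E^{ab}`. -/
theorem dspnmf_gradient_H {m n r : ℕ}
    (X : Matrix (Fin m) (Fin n) ℝ) (W : Matrix (Fin m) (Fin r) ℝ)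
    (H : Matrix (Fin r) (Fin n) ℝ) (lam : ℝ) (a : Fin r) (b : Fin n) :
    HasDerivAt (fun t : ℝ => dspObjective X lam W (H + t • Matrix.single a b 1))
      (-2 * (Wᵀ * X) a b + 2 * (Wᵀ * W * H) a b
        - 4 * lam * (H * Xᵀ * X) a b + 4 * lam ^ 2 * (H * Hᵀ * H) a b) 0 := by
  set E : Matrix (Fin r) (Fin n) ℝ := Matrix.single a b 1 with hE
  have hH : ∀ i j, HasDerivAt (fun t : ℝ => (H + t • E) i j) (E i j) 0 := fun i j => by
    simpa using ((hasDerivAt_id (0 : ℝ)).mul_const (E i j)).const_add (H i j)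
  have hfit := hasDerivAt_frobSq (A := fun t : ℝ => X - W * (H + t • E)) (dA := -(W * E))
    (t := 0) fun i j => by
      simpa using (hasDerivAt_matrix_mul_apply (A := fun _ => W) (dA := 0)
        (fun i j => hasDerivAt_const (0 : ℝ) (W i j)) hH i j).const_sub (X i j)
  have hgram := hasDerivAt_frobSq
    (A := fun t : ℝ => Xᵀ * X - lam • ((H + t • E)ᵀ * (H + t • E)))
    (dA := -(lam • (Eᵀ * H + Hᵀ * E))) (t := 0) fun i j => by
      simpa [mul_add, -neg_add_rev] using ((hasDerivAt_matrix_mul_apply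
        (A := fun t : ℝ => (H + t • E)ᵀ) (dA := Eᵀ)
        (fun i j => hH j i) hH i j).const_mul lam).const_sub ((Xᵀ * X) i j)
  have trace_mul_E : ∀ M : Matrix (Fin n) (Fin r) ℝ, (M * E).trace = Mᵀ a b := fun M => by
    simp [hE, trace_mul_single]
  have hsymm : ((Xᵀ * X - lam • (Hᵀ * H))ᵀ * (Eᵀ * H)).trace
      = ((Xᵀ * X - lam • (Hᵀ * H))ᵀ * (Hᵀ * E)).trace := by
    rw [← trace_transpose, transpose_mul, trace_mul_comm]
    simp
  refine (hfit.add hgram).congr_deriv ?_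
  simp only [zero_smul, add_zero, Matrix.mul_neg, Matrix.mul_smul, Matrix.mul_add, trace_neg,
    trace_smul, trace_add, hsymm]
  simp only [← Matrix.mul_assoc, trace_mul_E]
  simp only [transpose_mul, transpose_transpose, transpose_sub, transpose_smul, Matrix.mul_sub,
    Matrix.mul_smul, Matrix.mul_assoc, Matrix.sub_apply, Matrix.smul_apply, smul_eq_mul]
  ring
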